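/- arXiv:0811.0965 — 4 statements merged into one kernel-verified Lean document; each statement's English description precedes it below -/
import Mathlib

section
/- Let A = [[a,c],[b,d]] be a 2×2 quaternionic matrix satisfying Aᴴ H A = H with H = [[1,0],[0,−1]]. Then the regular fractional transformation ℱ_A maps the open unit ball 𝔹 = {q ∈ ℍ : |q| < 1} bijectively onto itself, and there exist unique u, α ∈ ℍ with |u| = 1 and |α| < 1 such that for all q ∈ 𝔹: ℱ_A(q) = (1 − q·conj(α))^{-*} * (q − α)·u, i.e. ℱ_A(q) = (|α|²q² − 2Re(α)q + 1)⁻¹ · (−q²α + q(1 + α²) − α) · u. -/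
open Quaternion Matrix

/-- The real quadratic denominator `|c|²q² + 2Re(c·conj d)q + |d|²` of the regular
fractional transformation associated to `[[a,c],[b,d]]`. -/
noncomputable def regDenom (c d q : ℍ[ℝ]) : ℍ[ℝ] :=
  ((‖c‖ ^ 2 : ℝ) : ℍ[ℝ]) * q ^ 2 + ((2 * (c * star d).re : ℝ) : ℍ[ℝ]) * q + ((‖d‖ ^ 2 : ℝ) : ℍ[ℝ])

/-- The regular fractional transformation `ℱ_A(q) = (qc+d)^{-*} * (qa+b)` associated to
`A = [[a,c],[b,d]]`, in explicit form. -/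
noncomputable def regFT (a c b d q : ℍ[ℝ]) : ℍ[ℝ] :=
  (regDenom c d q)⁻¹ *
    (q ^ 2 * (star c * a) + q * (star d * a + star c * b) + star d * b)

/-!
Conjugating the variable by `q * star c + star d` turns `ℱ_A` into the classical linear fractional
map `p ↦ (p * c + d)⁻¹ * (p * a + b)`. Both steps are bijections of the unit ball: the conjugation
is undone by the one attached to `(c, d)`, because `(q * star c + star d) * (p * c + d)` is a
polynomial in `q` with real coefficients and so commutes with `q`; the classical map is invertible
because the row action `(x, y) ↦ (x, y) A` preserves `|y|² - |x|²`. Multiplying `A` on the left by a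
nonzero scalar does not change `ℱ_A`, so dividing by `d` gives the normal form, whose parameters are
determined by the zero `α` of `ℱ_A` and one nonzero value.
-/

open Metric

section DivisionRing

variable {K : Type*} [DivisionRing K]

/-- The classical linear fractional map `p ↦ (p * c + d)⁻¹ * (p * a + b)` of `A = !![a, c; b, d]`.
It is the right action of matrices on row vectors `(p, 1)`, read in the chart `y⁻¹ * x`. -/
def linearFractional (A : Matrix (Fin 2) (Fin 2) K) (p : K) : K :=
  (p * A 0 1 + A 1 1)⁻¹ * (p * A 0 0 + A 1 0)

lemma linearFractional_one (p : K) : linearFractional 1 p = p := by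
  simp [linearFractional]

lemma linearFractional_mul (A B : Matrix (Fin 2) (Fin 2) K) {p : K}
    (hp : p * A 0 1 + A 1 1 ≠ 0) :
    linearFractional (A * B) p = linearFractional B (linearFractional A p) := by
  set x := p * A 0 0 + A 1 0 with hx
  set y := p * A 0 1 + A 1 1 with hy
  have row_mul (j : Fin 2) : p * (A * B) 0 j + (A * B) 1 j = y * (y⁻¹ * x * B 0 j + B 1 j) := by
    rw [mul_add, mul_assoc, mul_inv_cancel_left₀ hp, hx, hy, Matrix.mul_apply, Matrix.mul_apply,
      Fin.sum_univ_two, Fin.sum_univ_two]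
    noncomm_ring
  calc linearFractional (A * B) p
      = (y * (y⁻¹ * x * B 0 1 + B 1 1))⁻¹ * (y * (y⁻¹ * x * B 0 0 + B 1 0)) := by
        rw [linearFractional, row_mul, row_mul]
    _ = linearFractional B (y⁻¹ * x) := by
        rw [_root_.mul_inv_rev, mul_assoc, inv_mul_cancel_left₀ hp, linearFractional]

/-- Conjugation of `q` by the linear polynomial `q * c + d`. The regular quotient `f^{-*} * g` is
the pointwise quotient `f⁻¹ * g` evaluated at the twist of `q` by the regular conjugate of `f`. -/
def twist (c d q : K) : K := (q * c + d)⁻¹ * q * (q * c + d)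

lemma mul_twist_add {c d q : K} (h : q * c + d ≠ 0) (a b : K) :
    (q * c + d) * (twist c d q * a + b) = q ^ 2 * (c * a) + q * (d * a + c * b) + d * b := by
  have h_twist : (q * c + d) * twist c d q = q * (q * c + d) := by
    rw [twist, mul_assoc, mul_inv_cancel_left₀ h]
  rw [mul_add, ← mul_assoc, h_twist]
  noncomm_ring

end DivisionRing

section NormedDivisionRing

variable {K : Type*} [NormedDivisionRing K] {c d q : K}

lemma mul_add_ne_zero_of_norm_lt (hcd : ‖c‖ < ‖d‖) (hq : ‖q‖ < 1) : q * c + d ≠ 0 := by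
  intro h
  have h_norm : ‖q‖ * ‖c‖ = ‖d‖ := by
    rw [← norm_mul, eq_neg_of_add_eq_zero_left h, norm_neg]
  nlinarith [norm_nonneg c]

lemma norm_twist (h : q * c + d ≠ 0) : ‖twist c d q‖ = ‖q‖ := by
  rw [twist, norm_mul, norm_mul, norm_inv, mul_right_comm,
    inv_mul_cancel₀ (norm_ne_zero_iff.mpr h), one_mul]

lemma mapsTo_ball_twist (hcd : ‖c‖ < ‖d‖) : Set.MapsTo (twist c d) (ball 0 1) (ball 0 1) := by
  intro q hq
  rw [mem_ball_zero_iff] at hq ⊢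
  rwa [norm_twist (mul_add_ne_zero_of_norm_lt hcd hq)]

lemma bijOn_ball_mul_right {u : K} (hu : ‖u‖ = 1) :
    Set.BijOn (· * u) (ball 0 1) (ball 0 1) := by
  have hu₀ : u ≠ 0 := norm_ne_zero_iff.mp (hu ▸ one_ne_zero)
  exact Set.InvOn.bijOn (f' := (· * u⁻¹))
    ⟨fun q _ => mul_inv_cancel_right₀ hu₀ q, fun q _ => inv_mul_cancel_right₀ hu₀ q⟩
    (fun q hq => by simpa [hu] using hq) (fun q hq => by simpa [hu] using hq)

end NormedDivisionRing

section PseudoUnitary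

variable {R : Type*} [Ring R]

variable (R) in
/-- The matrix `H` of the Hermitian form of signature `(1, 1)`. -/
def signatureForm : Matrix (Fin 2) (Fin 2) R := !![1, 0; 0, -1]

lemma signatureForm_mul_self : signatureForm R * signatureForm R = 1 := by
  simp [signatureForm, Matrix.one_fin_two]

variable [StarRing R] {A : Matrix (Fin 2) (Fin 2) R}

lemma conjTranspose_signatureForm : (signatureForm R)ᴴ = signatureForm R := by
  ext i j
  fin_cases i <;> fin_cases j <;> simp [signatureForm]

/-- The adjoint `H * Aᴴ * H` of `A` with respect to the form `H`. -/
def signatureAdjoint (A : Matrix (Fin 2) (Fin 2) R) : Matrix (Fin 2) (Fin 2) R :=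
  signatureForm R * Aᴴ * signatureForm R

/-- Membership in the isometry group of the form `H`, which is `Sp(1,1)` when `R = ℍ`. -/
def IsPseudoUnitary (A : Matrix (Fin 2) (Fin 2) R) : Prop :=
  Aᴴ * signatureForm R * A = signatureForm R

namespace IsPseudoUnitary

lemma signatureAdjoint_mul (hA : IsPseudoUnitary A) : signatureAdjoint A * A = 1 := by
  rw [signatureAdjoint, mul_assoc, mul_assoc, ← mul_assoc Aᴴ, hA, signatureForm_mul_self]

variable [IsStablyFiniteRing R]

lemma mul_signatureAdjoint (hA : IsPseudoUnitary A) : A * signatureAdjoint A = 1 :=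
  mul_eq_one_comm.mp hA.signatureAdjoint_mul

lemma mul_signatureForm_mul (hA : IsPseudoUnitary A) :
    A * signatureForm R * Aᴴ = signatureForm R := by
  simpa only [signatureAdjoint, mul_assoc, signatureForm_mul_self, mul_one, one_mul]
    using congrArg (· * signatureForm R) hA.mul_signatureAdjoint

protected lemma signatureAdjoint (hA : IsPseudoUnitary A) :
    IsPseudoUnitary (signatureAdjoint A) := by
  have h_adjoint : (signatureAdjoint A)ᴴ = signatureForm R * A * signatureForm R := by
    simp only [signatureAdjoint, conjTranspose_mul, conjTranspose_signatureForm,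
      conjTranspose_conjTranspose, mul_assoc]
  calc (signatureAdjoint A)ᴴ * signatureForm R * signatureAdjoint A
      = signatureForm R * A * (signatureForm R * signatureForm R) * signatureAdjoint A := by
        rw [h_adjoint]; simp only [mul_assoc]
    _ = signatureForm R := by
        rw [signatureForm_mul_self, mul_one, mul_assoc, hA.mul_signatureAdjoint, mul_one]

end IsPseudoUnitary

end PseudoUnitary

section Quaternion

lemma star_mul_self_eq_coe_norm_sq (x : ℍ[ℝ]) : star x * x = ((‖x‖ ^ 2 : ℝ) : ℍ[ℝ]) := by
  rw [Quaternion.star_mul_self, Quaternion.normSq_eq_norm_mul_self, sq]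

lemma mul_signatureForm_mul_conjTranspose_apply_self {ι : Type*} (B : Matrix ι (Fin 2) ℍ[ℝ])
    (i : ι) :
    (B * signatureForm ℍ[ℝ] * Bᴴ) i i = ((‖B i 0‖ ^ 2 - ‖B i 1‖ ^ 2 : ℝ) : ℍ[ℝ]) := by
  simp [signatureForm, Matrix.mul_apply, Quaternion.self_mul_star,
    Quaternion.normSq_eq_norm_mul_self, sq, sub_eq_add_neg]

namespace IsPseudoUnitary

variable {A : Matrix (Fin 2) (Fin 2) ℍ[ℝ]}

lemma norm_sq_sub_norm_sq (hA : IsPseudoUnitary A) (p : ℍ[ℝ]) :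
    ‖p * A 0 1 + A 1 1‖ ^ 2 - ‖p * A 0 0 + A 1 0‖ ^ 2 = 1 - ‖p‖ ^ 2 := by
  set row : Matrix (Fin 1) (Fin 2) ℍ[ℝ] := !![p, 1] with row_def
  have h_invariant : row * A * signatureForm ℍ[ℝ] * (row * A)ᴴ =
      row * signatureForm ℍ[ℝ] * rowᴴ := by
    conv_rhs => rw [← hA.mul_signatureForm_mul]
    simp only [conjTranspose_mul, Matrix.mul_assoc]
  have h_entry := congrFun₂ h_invariant 0 0
  simp only [mul_signatureForm_mul_conjTranspose_apply_self, Quaternion.coe_inj] at h_entry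
  have h_norm : ‖p * A 0 0 + A 1 0‖ ^ 2 - ‖p * A 0 1 + A 1 1‖ ^ 2 = ‖p‖ ^ 2 - 1 := by
    simpa [row_def, Matrix.mul_apply] using h_entry
  linarith

lemma coe_norm_sq_sub_norm_sq_col (hA : IsPseudoUnitary A) (j : Fin 2) :
    ((‖A 0 j‖ ^ 2 - ‖A 1 j‖ ^ 2 : ℝ) : ℍ[ℝ]) = signatureForm ℍ[ℝ] j j := by
  rw [← hA]
  simpa using (mul_signatureForm_mul_conjTranspose_apply_self Aᴴ j).symm

lemma norm_lt_norm (hA : IsPseudoUnitary A) : ‖A 0 1‖ < ‖A 1 1‖ := by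
  have h_col : ‖A 0 1‖ ^ 2 - ‖A 1 1‖ ^ 2 = -1 :=
    Quaternion.coe_inj.mp <| (hA.coe_norm_sq_sub_norm_sq_col 1).trans (by simp [signatureForm])
  exact lt_of_pow_lt_pow_left₀ 2 (norm_nonneg _) (by linarith)

lemma norm_eq_norm (hA : IsPseudoUnitary A) : ‖A 0 0‖ = ‖A 1 1‖ := by
  have h_col : ‖A 0 0‖ ^ 2 - ‖A 1 0‖ ^ 2 = 1 :=
    Quaternion.coe_inj.mp <| (hA.coe_norm_sq_sub_norm_sq_col 0).trans (by simp [signatureForm])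
  have h_row : ‖A 1 1‖ ^ 2 - ‖A 1 0‖ ^ 2 = 1 := by
    simpa using hA.norm_sq_sub_norm_sq 0
  exact (pow_left_inj₀ (norm_nonneg _) (norm_nonneg _) two_ne_zero).mp (by linarith)

lemma star_mul_eq_star_mul (hA : IsPseudoUnitary A) :
    star (A 0 1) * A 0 0 = star (A 1 1) * A 1 0 := by
  have h := congrFun₂ hA 1 0
  simpa [signatureForm, Matrix.mul_apply, add_neg_eq_zero] using h

lemma mul_add_ne_zero (hA : IsPseudoUnitary A) {p : ℍ[ℝ]} (hp : p ∈ ball 0 1) :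
    p * A 0 1 + A 1 1 ≠ 0 :=
  mul_add_ne_zero_of_norm_lt hA.norm_lt_norm (mem_ball_zero_iff.mp hp)

lemma mapsTo_ball_linearFractional (hA : IsPseudoUnitary A) :
    Set.MapsTo (linearFractional A) (ball 0 1) (ball 0 1) := by
  intro p hp
  have h_denom : 0 < ‖p * A 0 1 + A 1 1‖ := norm_pos_iff.mpr (hA.mul_add_ne_zero hp)
  rw [mem_ball_zero_iff] at hp ⊢
  rw [linearFractional, norm_mul, norm_inv, inv_mul_lt_one₀ h_denom]
  have h_sub_pos : 0 < 1 - ‖p‖ ^ 2 := by nlinarith [norm_nonneg p]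
  exact lt_of_pow_lt_pow_left₀ 2 h_denom.le (by linarith [hA.norm_sq_sub_norm_sq p])

lemma bijOn_ball_linearFractional (hA : IsPseudoUnitary A) :
    Set.BijOn (linearFractional A) (ball 0 1) (ball 0 1) := by
  refine Set.InvOn.bijOn (f' := linearFractional (signatureAdjoint A))
    ⟨fun p hp => ?_, fun p hp => ?_⟩
    hA.mapsTo_ball_linearFractional hA.signatureAdjoint.mapsTo_ball_linearFractional
  · rw [← linearFractional_mul _ _ (hA.mul_add_ne_zero hp), hA.mul_signatureAdjoint,
      linearFractional_one]
  · rw [← linearFractional_mul _ _ (hA.signatureAdjoint.mul_add_ne_zero hp),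
      hA.signatureAdjoint_mul, linearFractional_one]

end IsPseudoUnitary

lemma regDenom_eq (c d q : ℍ[ℝ]) :
    regDenom c d q = q ^ 2 * (star c * c) + q * (star d * c + star c * d) + star d * d := by
  have h_trace : star d * c + star c * d = ((2 * (c * star d).re : ℝ) : ℍ[ℝ]) := by
    have h_star : star c * d = star (star d * c) := by rw [star_mul, star_star]
    have h_re : (star d * c).re = (c * star d).re := by
      simp only [Quaternion.re_mul]
      ring
    rw [h_star, Quaternion.self_add_star', h_re]
  rw [h_trace, star_mul_self_eq_coe_norm_sq, star_mul_self_eq_coe_norm_sq, regDenom,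
    Quaternion.coe_commutes, Quaternion.coe_commutes]

lemma commute_regDenom (c d q : ℍ[ℝ]) : Commute (regDenom c d q) q := by
  have h_coe (r : ℝ) : Commute (r : ℍ[ℝ]) q := Quaternion.coe_commutes r q
  exact (((h_coe _).mul_left (Commute.refl q |>.pow_left 2)).add_left
    ((h_coe _).mul_left (Commute.refl q))).add_left (h_coe _)

section Twist

variable {c d q : ℍ[ℝ]}

lemma mul_twist_add_eq_regDenom (h : q * star c + star d ≠ 0) :
    (q * star c + star d) * (twist (star c) (star d) q * c + d) = regDenom c d q := by
  rw [mul_twist_add h, regDenom_eq]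

lemma regFT_eq_linearFractional_twist (a b : ℍ[ℝ]) (h : q * star c + star d ≠ 0) :
    regFT a c b d q = linearFractional !![a, c; b, d] (twist (star c) (star d) q) := by
  rw [regFT, ← mul_twist_add_eq_regDenom h, ← mul_twist_add h, _root_.mul_inv_rev, mul_assoc,
    inv_mul_cancel_left₀ h]
  rfl

lemma twist_twist_star (hcd : ‖c‖ < ‖d‖) (hq : ‖q‖ < 1) :
    twist c d (twist (star c) (star d) q) = q := by
  have hs : q * star c + star d ≠ 0 := mul_add_ne_zero_of_norm_lt (by simpa using hcd) hq
  have ht : twist (star c) (star d) q * c + d ≠ 0 :=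
    mul_add_ne_zero_of_norm_lt hcd (by rwa [norm_twist hs])
  set s := q * star c + star d
  set t := twist (star c) (star d) q * c + d
  have h_comm : Commute (s * t) q := by
    rw [mul_twist_add_eq_regDenom hs]
    exact commute_regDenom c d q
  calc twist c d (twist (star c) (star d) q)
      = t⁻¹ * (s⁻¹ * q * s) * t := rfl
    _ = (s * t)⁻¹ * (q * (s * t)) := by simp only [_root_.mul_inv_rev, mul_assoc]
    _ = q := by rw [← h_comm.eq, inv_mul_cancel_left₀ (mul_ne_zero hs ht)]

lemma bijOn_ball_twist (hcd : ‖c‖ < ‖d‖) : Set.BijOn (twist c d) (ball 0 1) (ball 0 1) := by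
  have hcd_star : ‖star c‖ < ‖star d‖ := by simpa using hcd
  refine Set.InvOn.bijOn (f' := twist (star c) (star d)) ⟨fun q hq => ?_, fun q hq => ?_⟩
    (mapsTo_ball_twist hcd) (mapsTo_ball_twist hcd_star)
  · simpa using twist_twist_star hcd_star (mem_ball_zero_iff.mp hq)
  · exact twist_twist_star hcd (mem_ball_zero_iff.mp hq)

end Twist

lemma IsPseudoUnitary.bijOn_ball_regFT {a c b d : ℍ[ℝ]} (hA : IsPseudoUnitary !![a, c; b, d]) :
    Set.BijOn (regFT a c b d) (ball 0 1) (ball 0 1) := by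
  have hcd : ‖star c‖ < ‖star d‖ := by simpa using hA.norm_lt_norm
  refine (hA.bijOn_ball_linearFractional.comp (bijOn_ball_twist hcd)).congr fun q hq => ?_
  exact (regFT_eq_linearFractional_twist a b
    (mul_add_ne_zero_of_norm_lt hcd (mem_ball_zero_iff.mp hq))).symm

lemma regFT_mul_left {x : ℍ[ℝ]} (hx : x ≠ 0) (a c b d q : ℍ[ℝ]) :
    regFT (x * a) (x * c) (x * b) (x * d) q = regFT a c b d q := by
  have h_star_mul (y z : ℍ[ℝ]) : star (x * y) * (x * z) = (‖x‖ ^ 2) • (star y * z) := by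
    rw [star_mul, mul_assoc, ← mul_assoc (star x), star_mul_self_eq_coe_norm_sq,
      Quaternion.coe_mul_eq_smul, mul_smul_comm]
  have h_norm : ‖x‖ ^ 2 ≠ 0 := pow_ne_zero 2 (norm_ne_zero_iff.mpr hx)
  simp only [regFT, regDenom_eq, h_star_mul, mul_smul_comm, ← smul_add]
  rw [smul_inv₀, smul_mul_assoc, smul_smul, mul_inv_cancel₀ h_norm, one_smul]

lemma regFT_mul_right (a c b d u q : ℍ[ℝ]) :
    regFT (a * u) c (b * u) d q = regFT a c b d q * u := by
  simp only [regFT]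
  noncomm_ring

/-- The regular Moebius transformation `(1 - q * conj α)^{-*} * (q - α)` of the unit ball. -/
noncomputable def regMoebius (α q : ℍ[ℝ]) : ℍ[ℝ] := regFT 1 (-star α) (-α) 1 q

lemma regMoebius_eq (α q : ℍ[ℝ]) :
    regMoebius α q =
      (((‖α‖ ^ 2 : ℝ) : ℍ[ℝ]) * q ^ 2 - ((2 * α.re : ℝ) : ℍ[ℝ]) * q + 1)⁻¹ *
        (-(q ^ 2) * α + q * (1 + α ^ 2) - α) := by
  have h_denom : regDenom (-star α) 1 q =
      ((‖α‖ ^ 2 : ℝ) : ℍ[ℝ]) * q ^ 2 - ((2 * α.re : ℝ) : ℍ[ℝ]) * q + 1 := by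
    simp [regDenom, sub_eq_add_neg]
  rw [regMoebius, regFT, h_denom]
  congr 1
  simp only [star_neg, star_star, star_one]
  noncomm_ring

lemma regMoebius_self (α : ℍ[ℝ]) : regMoebius α α = 0 := by
  rw [regMoebius_eq, mul_eq_zero]
  right
  noncomm_ring

lemma IsPseudoUnitary.exists_regFT_eq_regMoebius_mul {a c b d : ℍ[ℝ]}
    (hA : IsPseudoUnitary !![a, c; b, d]) :
    ∃ u α : ℍ[ℝ], ‖u‖ = 1 ∧ ‖α‖ < 1 ∧ ∀ q, regFT a c b d q = regMoebius α q * u := by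
  have hcd : ‖c‖ < ‖d‖ := hA.norm_lt_norm
  have had : ‖a‖ = ‖d‖ := hA.norm_eq_norm
  have h_orth : star c * a = star d * b := hA.star_mul_eq_star_mul
  have hd_pos : 0 < ‖d‖ := (norm_nonneg c).trans_lt hcd
  have hd : d ≠ 0 := norm_pos_iff.mp hd_pos
  set u := d⁻¹ * a
  set α := -star (d⁻¹ * c)
  have hb : d⁻¹ * b = -α * u := by
    have h_inv : d⁻¹ = (Quaternion.normSq d)⁻¹ • star d := rfl
    have h_star_inv : star d⁻¹ = (Quaternion.normSq d)⁻¹ • d := by simp [h_inv]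
    calc d⁻¹ * b = (Quaternion.normSq d)⁻¹ • (star d * b) := by rw [h_inv, smul_mul_assoc]
      _ = (Quaternion.normSq d)⁻¹ • (star c * a) := by rw [h_orth]
      _ = star c * star d⁻¹ * u := by
        rw [h_star_inv, mul_smul_comm, smul_mul_assoc, mul_assoc, mul_inv_cancel_left₀ hd]
      _ = -α * u := by rw [neg_neg, star_mul]
  refine ⟨u, α, ?_, ?_, fun q => ?_⟩
  · rw [norm_mul, norm_inv, had, inv_mul_cancel₀ hd_pos.ne']
  · rw [norm_neg, norm_star, norm_mul, norm_inv, inv_mul_lt_one₀ hd_pos]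
    exact hcd
  · calc regFT a c b d q
        = regFT (d⁻¹ * a) (d⁻¹ * c) (d⁻¹ * b) (d⁻¹ * d) q :=
          (regFT_mul_left (inv_ne_zero hd) a c b d q).symm
      _ = regFT (1 * u) (-star α) (-α * u) 1 q := by
          rw [hb, inv_mul_cancel₀ hd, one_mul, star_neg, star_star, neg_neg (d⁻¹ * c)]
      _ = regMoebius α q * u := regFT_mul_right ..

lemma regMoebius_mul_unique {F : ℍ[ℝ] → ℍ[ℝ]} (hF : Set.BijOn F (ball 0 1) (ball 0 1))
    {u v α β : ℍ[ℝ]} (hα : ‖α‖ < 1) (hβ : ‖β‖ < 1)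
    (hFα : ∀ q ∈ ball (0 : ℍ[ℝ]) 1, F q = regMoebius α q * u)
    (hFβ : ∀ q ∈ ball (0 : ℍ[ℝ]) 1, F q = regMoebius β q * v) : α = β ∧ u = v := by
  rw [← mem_ball_zero_iff] at hα hβ
  obtain rfl : α = β := hF.injOn hα hβ <| by
    rw [hFα α hα, hFβ β hβ, regMoebius_self, regMoebius_self, zero_mul, zero_mul]
  obtain ⟨w, hw⟩ : ∃ w : ℍ[ℝ], ‖w‖ = 1 / 2 := exists_norm_eq _ (by norm_num)
  obtain ⟨q, hq, rfl⟩ : w ∈ F '' ball 0 1 := hF.surjOn (mem_ball_zero_iff.mpr (by linarith))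
  have hw₀ : regMoebius α q * u ≠ 0 := by
    rw [← hFα q hq, ← norm_ne_zero_iff, hw]
    norm_num
  exact ⟨rfl, mul_left_cancel₀ (left_ne_zero_of_mul hw₀) (by rw [← hFα q hq, hFβ q hq])⟩

end Quaternion

/-- For `A = [[a,c],[b,d]] ∈ Sp(1,1)`, the regular fractional transformation `ℱ_A` maps the
unit ball `𝔹` bijectively onto itself and has the form
`ℱ_A(q) = (1 − q·conj α)^{-*} * (q − α)·u` for unique `u, α` with `|u| = 1`, `|α| < 1`
(here the pair is `x = (u, α)`). -/
theorem regular_moebius_transformation_of_ball (a c b d : ℍ[ℝ])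
    (hA : !![a, c; b, d]ᴴ * !![(1 : ℍ[ℝ]), 0; 0, -1] * !![a, c; b, d] =
      !![(1 : ℍ[ℝ]), 0; 0, -1]) :
    Set.BijOn (regFT a c b d) (Metric.ball 0 1) (Metric.ball 0 1) ∧
      ∃! x : ℍ[ℝ] × ℍ[ℝ], ‖x.1‖ = 1 ∧ ‖x.2‖ < 1 ∧
        ∀ q ∈ Metric.ball (0 : ℍ[ℝ]) 1,
          regFT a c b d q =
            (((‖x.2‖ ^ 2 : ℝ) : ℍ[ℝ]) * q ^ 2 - ((2 * x.2.re : ℝ) : ℍ[ℝ]) * q + 1)⁻¹ *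
              (-(q ^ 2) * x.2 + q * (1 + x.2 ^ 2) - x.2) * x.1 := by
  simp only [← regMoebius_eq]
  have hA' : IsPseudoUnitary !![a, c; b, d] := hA
  have hF := hA'.bijOn_ball_regFT
  obtain ⟨u, α, hu, hα, hFα⟩ := hA'.exists_regFT_eq_regMoebius_mul
  refine ⟨hF, (u, α), ⟨hu, hα, fun q _ => hFα q⟩, ?_⟩
  rintro ⟨v, β⟩ ⟨-, hβ, hFβ⟩
  obtain ⟨rfl, rfl⟩ := regMoebius_mul_unique hF hα hβ (fun q _ => hFα q) hFβ
  rfl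
end

section
/- Let f(q) = ∑_{n≥0} qⁿaₙ be a power series converging for all q ∈ 𝔹 = {q ∈ ℍ : |q| < 1}, with |f(q)| < 1 for all q ∈ 𝔹 and a₀ = 0 (i.e. f : 𝔹 → 𝔹 is regular with f(0) = 0). Let g(q) = ∑_{n≥0} qⁿaₙ₊₁, so that f(q) = q·g(q) on 𝔹. Then |g(q)| ≤ 1 for all q ∈ 𝔹; moreover, if |g(q₀)| = 1 for some q₀ ∈ 𝔹, then there exists u ∈ ℍ with |u| = 1 such that g(q) = u for all q ∈ 𝔹 (equivalently, f(q) = qu). -/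
open Quaternion

/-!
The subfields `ℝ + ℝI` with `I ^ 2 = -1` are isometric copies of `ℂ` whose union is `ℍ[ℝ]`, and any
two of them share `0`. A power series with coefficients on the right restricts on each of them to a
holomorphic vector-valued function, with `ℂ` acting on values by left multiplication. The complex
Schwarz lemma on each slice bounds `g`. If `‖g q₀‖ = 1`, the strong maximum principle on the slice
through `q₀` carries the maximum to `0`, and from there it reaches every other slice.
-/

section PowerSeries

variable {𝕜 F : Type*} [DenselyNormedField 𝕜] [NormedAddCommGroup F] [NormedSpace 𝕜 F]
  {b : ℕ → F} {G : 𝕜 → F} {R : ℝ}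

open FormalMultilinearSeries in
theorem hasFPowerSeriesOnBall_of_hasSum_pow_smul (hR : 0 < R)
    (hG : ∀ z ∈ Metric.ball (0 : 𝕜) R, HasSum (fun n : ℕ => z ^ n • b n) (G z)) :
    HasFPowerSeriesOnBall G (fun n => ContinuousMultilinearMap.mkPiRing 𝕜 (Fin n) (b n)) 0
      (ENNReal.ofReal R) where
  r_le := by
    refine ENNReal.le_of_forall_nnreal_lt fun r hr => ?_
    have hrR : (r : ℝ) < R := by simpa using (ENNReal.lt_ofReal_iff_toReal_lt (by simp)).1 hr
    obtain ⟨z, hrz, hzR⟩ := NormedField.exists_lt_norm_lt 𝕜 r.coe_nonneg hrR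
    have hterms := (hG z (by simpa using hzR)).summable.tendsto_atTop_zero.norm
    refine le_trans (by exact_mod_cast hrz.le) (le_radius_of_tendsto _ (r := ‖z‖₊) (l := 0) ?_)
    simpa [norm_smul, mul_comm] using hterms
  r_pos := by simpa using hR
  hasSum {z} hz := by
    have hz' : z ∈ Metric.ball (0 : 𝕜) R := by simpa [Metric.eball_ofReal] using hz
    simpa using hG z hz'

theorem differentiableOn_ball_of_hasSum_pow_smul [CompleteSpace F]
    (hG : ∀ z ∈ Metric.ball (0 : 𝕜) R, HasSum (fun n : ℕ => z ^ n • b n) (G z)) :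
    DifferentiableOn 𝕜 G (Metric.ball 0 R) := by
  rcases le_or_gt R 0 with hR | hR
  · rw [Metric.ball_eq_empty.2 hR]
    exact differentiableOn_empty
  · simpa only [Metric.eball_ofReal] using
      (hasFPowerSeriesOnBall_of_hasSum_pow_smul hR hG).differentiableOn

end PowerSeries

theorem dslope_sub_smul_of_differentiableAt {𝕜 F : Type*} [NontriviallyNormedField 𝕜]
    [NormedAddCommGroup F] [NormedSpace 𝕜 F] {G : 𝕜 → F} {c : 𝕜} (hG : DifferentiableAt 𝕜 G c) :
    dslope (fun z => (z - c) • G z) c = G := by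
  classical
  have hderiv : HasDerivAt (fun z => (z - c) • G z) (G c) c := by
    simpa using ((hasDerivAt_id c).sub_const c).fun_smul hG.hasDerivAt
  rw [dslope_sub_smul, hderiv.deriv, Function.update_eq_self]

theorem norm_le_div_of_mapsTo_ball_sub_smul {F : Type*} [NormedAddCommGroup F] [NormedSpace ℂ F]
    {G : ℂ → F} {c z : ℂ} {R₁ R₂ : ℝ} (hG : DifferentiableOn ℂ G (Metric.ball c R₁))
    (hmaps : Set.MapsTo (fun z => (z - c) • G z) (Metric.ball c R₁) (Metric.closedBall 0 R₂))
    (hz : z ∈ Metric.ball c R₁) : ‖G z‖ ≤ R₂ / R₁ := by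
  have hc : Metric.ball c R₁ ∈ nhds c := Metric.ball_mem_nhds c (Metric.pos_of_mem_ball hz)
  rw [← dslope_sub_smul_of_differentiableAt (hG.differentiableAt hc)]
  refine Complex.norm_dslope_le_div_of_mapsTo_ball ?_ (by simpa using hmaps) hz
  exact (differentiableOn_id.sub_const c).smul hG

theorem strictConvexSpace_congr_normedSpace {E : Type*} [NormedAddCommGroup E]
    (i j : NormedSpace ℝ E) (hi : @StrictConvexSpace ℝ E _ _ _ i) :
    @StrictConvexSpace ℝ E _ _ _ j :=
  letI := j
  StrictConvexSpace.of_norm_add_ne_two fun x y hx hy hne hadd =>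
    hne <| @eq_of_norm_eq_of_norm_add_eq E _ i hi x y (hx.trans hy.symm) <| by
      rw [hadd, hx, hy, one_add_one_eq_two]

theorem norm_algHom_complex_quaternion (φ : ℂ →ₐ[ℝ] ℍ[ℝ]) (z : ℂ) : ‖φ z‖ = ‖z‖ := by
  have hsq : φ Complex.I ^ 2 = -1 := by rw [← map_pow, Complex.I_sq, map_neg, map_one]
  have hnorm : ‖φ Complex.I‖ = 1 := by
    rw [← pow_eq_one_iff_of_nonneg (norm_nonneg _) two_ne_zero, ← norm_pow, hsq, norm_neg, norm_one]
  have hnormSq : Quaternion.normSq (φ Complex.I) = 1 := by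
    rw [Quaternion.normSq_eq_norm_mul_self, hnorm, one_mul]
  have hre : (φ Complex.I).re = 0 := by
    rw [← Quaternion.sq_eq_neg_normSq, hnormSq, hsq, Quaternion.coe_one]
  have hφz : φ z = (z.re : ℍ[ℝ]) + z.im • φ Complex.I := by
    conv_lhs => rw [← Complex.re_add_im z, map_add, map_mul]
    simp [← Complex.coe_algebraMap, Algebra.smul_def]
  rw [← sq_eq_sq₀ (norm_nonneg _) (norm_nonneg _), sq, ← Quaternion.normSq_eq_norm_mul_self, hφz,
    Quaternion.normSq_add, Quaternion.normSq_coe, Quaternion.normSq_smul, hnormSq, Complex.sq_norm,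
    Complex.normSq_apply]
  simp [hre, sq]

theorem algHom_complex_mem_ball_iff (φ : ℂ →ₐ[ℝ] ℍ[ℝ]) {z : ℂ} {r : ℝ} :
    φ z ∈ Metric.ball 0 r ↔ z ∈ Metric.ball 0 r := by
  rw [mem_ball_zero_iff, mem_ball_zero_iff, norm_algHom_complex_quaternion]

theorem exists_mul_self_eq_neg_one_and_smul_eq {v : ℍ[ℝ]} (hv : v.re = 0) :
    ∃ (J : ℍ[ℝ]) (t : ℝ), J * J = -1 ∧ t • J = v := by
  rcases eq_or_ne v 0 with rfl | hne
  · refine ⟨Quaternion.ofComplex Complex.I, 0, ?_, zero_smul ℝ _⟩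
    rw [← map_mul, Complex.I_mul_I, map_neg, map_one]
  · have hnorm : ‖v‖ ≠ 0 := norm_ne_zero_iff.2 hne
    refine ⟨‖v‖⁻¹ • v, ‖v‖, ?_, smul_inv_smul₀ hnorm v⟩
    rw [← sq, smul_pow, Quaternion.sq_eq_neg_normSq.2 hv, Quaternion.normSq_eq_norm_mul_self,
      smul_neg, ← Quaternion.coe_smul, smul_eq_mul, ← sq, ← mul_pow, inv_mul_cancel₀ hnorm,
      one_pow, Quaternion.coe_one]

theorem exists_algHom_complex_apply_eq (q : ℍ[ℝ]) : ∃ (φ : ℂ →ₐ[ℝ] ℍ[ℝ]) (z : ℂ), φ z = q := by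
  obtain ⟨J, t, hJ, ht⟩ := exists_mul_self_eq_neg_one_and_smul_eq q.re_im
  refine ⟨Complex.lift ⟨J, hJ⟩, ⟨q.re, t⟩, ?_⟩
  rw [Complex.lift_apply, Complex.liftAux_apply, ht]
  exact q.re_add_im

section Regular

variable {E : Type*} [NormedAddCommGroup E] [Module ℍ[ℝ] E] [IsBoundedSMul ℍ[ℝ] E]

variable (E) in
/-- The complex normed space structure on a quaternionic normed module obtained by letting `ℂ` act
through a copy of `ℂ` inside `ℍ[ℝ]`, used to apply complex analysis on the corresponding slice.
It is not an instance because it depends on the chosen copy. -/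
noncomputable abbrev sliceNormedSpace (φ : ℂ →ₐ[ℝ] ℍ[ℝ]) : NormedSpace ℂ E where
  toModule := Module.compHom E φ.toRingHom
  norm_smul_le z x := by
    rw [← norm_algHom_complex_quaternion φ z]
    exact norm_smul_le (φ z) x

/-- Regularity on the open unit ball of `ℍ[ℝ]`: being the sum of a convergent power series with
coefficients on the right. Values are taken in a left `ℍ[ℝ]`-module, so that for `ℍ[ℝ]` itself the
terms are `q ^ n * a n`. -/
def IsRegularOnBall (g : ℍ[ℝ] → E) : Prop :=
  ∃ a : ℕ → E, ∀ q ∈ Metric.ball (0 : ℍ[ℝ]) 1, HasSum (fun n : ℕ => q ^ n • a n) (g q)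

namespace IsRegularOnBall

variable [CompleteSpace E] {g : ℍ[ℝ] → E}

theorem differentiableOn_comp_algHom (hg : IsRegularOnBall g) (φ : ℂ →ₐ[ℝ] ℍ[ℝ]) :
    letI := sliceNormedSpace E φ
    DifferentiableOn ℂ (g ∘ φ) (Metric.ball 0 1) := by
  let := sliceNormedSpace E φ
  obtain ⟨a, ha⟩ := hg
  refine differentiableOn_ball_of_hasSum_pow_smul (b := a) fun z hz => ?_
  have hterm (n : ℕ) : z ^ n • a n = φ z ^ n • a n := congrArg (· • a n) (map_pow φ z n)
  simpa only [hterm, Function.comp_apply] using ha (φ z) ((algHom_complex_mem_ball_iff φ).2 hz)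

theorem norm_le_of_norm_smul_le (hg : IsRegularOnBall g) {C : ℝ}
    (hbound : ∀ q ∈ Metric.ball (0 : ℍ[ℝ]) 1, ‖q • g q‖ ≤ C) {q : ℍ[ℝ]}
    (hq : q ∈ Metric.ball 0 1) : ‖g q‖ ≤ C := by
  obtain ⟨φ, z, rfl⟩ := exists_algHom_complex_apply_eq q
  let := sliceNormedSpace E φ
  have hmaps : Set.MapsTo (fun w => (w - 0) • (g ∘ φ) w) (Metric.ball (0 : ℂ) 1)
      (Metric.closedBall 0 C) := fun w hw => by
    beta_reduce
    rw [sub_zero, mem_closedBall_zero_iff]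
    exact hbound (φ w) ((algHom_complex_mem_ball_iff φ).2 hw)
  simpa using norm_le_div_of_mapsTo_ball_sub_smul (hg.differentiableOn_comp_algHom φ) hmaps
    ((algHom_complex_mem_ball_iff φ).1 hq)

variable [NormedSpace ℝ E] [StrictConvexSpace ℝ E]

theorem apply_algHom_eq_of_isMaxOn_norm (hg : IsRegularOnBall g) (φ : ℂ →ₐ[ℝ] ℍ[ℝ]) {z w : ℂ}
    (hz : φ z ∈ Metric.ball 0 1) (hw : φ w ∈ Metric.ball 0 1)
    (hmax : IsMaxOn (norm ∘ g) (Metric.ball 0 1) (φ z)) : g (φ w) = g (φ z) := by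
  -- The given real structure on `E` is not definitionally the one underlying the slice structure.
  have hconvex := strictConvexSpace_congr_normedSpace (E := E) inferInstance
    (@NormedSpace.complexToReal E _ (sliceNormedSpace E φ)) inferInstance
  let := sliceNormedSpace E φ
  have hball {v : ℂ} := algHom_complex_mem_ball_iff φ (z := v) (r := 1)
  exact Complex.eqOn_of_isPreconnected_of_isMaxOn_norm (convex_ball _ _).isPreconnected
    Metric.isOpen_ball (hg.differentiableOn_comp_algHom φ) (hball.1 hz)
    (fun v hv => hmax (hball.2 hv)) (hball.1 hw)

theorem eqOn_const_of_isMaxOn_norm (hg : IsRegularOnBall g) {q₀ : ℍ[ℝ]}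
    (hq₀ : q₀ ∈ Metric.ball 0 1) (hmax : IsMaxOn (norm ∘ g) (Metric.ball 0 1) q₀) :
    Set.EqOn g (fun _ => g q₀) (Metric.ball 0 1) := by
  have hg₀ : g 0 = g q₀ := by
    obtain ⟨φ, z, rfl⟩ := exists_algHom_complex_apply_eq q₀
    simpa using hg.apply_algHom_eq_of_isMaxOn_norm φ hq₀ (w := 0) (by simp) hmax
  have hmax₀ : IsMaxOn (norm ∘ g) (Metric.ball 0 1) 0 := fun q hq => by
    simpa [hg₀] using hmax hq
  intro q hq
  obtain ⟨φ, z, rfl⟩ := exists_algHom_complex_apply_eq q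
  rw [← hg₀]
  simpa using
    hg.apply_algHom_eq_of_isMaxOn_norm φ (z := 0) (by simp) hq (by simpa using hmax₀)

end IsRegularOnBall

theorem schwarz_lemma_general [CompleteSpace E] [NormedSpace ℝ E] [StrictConvexSpace ℝ E]
    {f g : ℍ[ℝ] → E} {C : ℝ} (hg : IsRegularOnBall g)
    (hf : ∀ q ∈ Metric.ball (0 : ℍ[ℝ]) 1, ‖f q‖ ≤ C)
    (hfg : ∀ q ∈ Metric.ball (0 : ℍ[ℝ]) 1, f q = q • g q) :
    (∀ q ∈ Metric.ball (0 : ℍ[ℝ]) 1, ‖g q‖ ≤ C) ∧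
      (∀ q₀ ∈ Metric.ball (0 : ℍ[ℝ]) 1, ‖g q₀‖ = C →
        ∃ u : E, ‖u‖ = C ∧ ∀ q ∈ Metric.ball (0 : ℍ[ℝ]) 1, g q = u) := by
  have hle : ∀ q ∈ Metric.ball (0 : ℍ[ℝ]) 1, ‖g q‖ ≤ C := fun q hq =>
    hg.norm_le_of_norm_smul_le (fun p hp => hfg p hp ▸ hf p hp) hq
  refine ⟨hle, fun q₀ hq₀ h => ⟨g q₀, h, hg.eqOn_const_of_isMaxOn_norm hq₀ fun q hq => ?_⟩⟩
  simpa [h] using hle q hq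

end Regular

/-- Schwarz lemma for regular quaternionic functions: if `f : 𝔹 → 𝔹` is regular with
`f(0) = 0` and `f(q) = q·g(q)` with `g` regular, then `|g| ≤ 1` on `𝔹`, with equality at
some point only if `g` is a unitary constant. -/
theorem schwarz_lemma (f g : ℍ[ℝ] → ℍ[ℝ]) (a : ℕ → ℍ[ℝ])
    (hf : ∀ q ∈ Metric.ball (0 : ℍ[ℝ]) 1, HasSum (fun n : ℕ => q ^ n * a n) (f q))
    (hfb : ∀ q ∈ Metric.ball (0 : ℍ[ℝ]) 1, ‖f q‖ < 1)
    (h0 : a 0 = 0)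
    (hg : ∀ q ∈ Metric.ball (0 : ℍ[ℝ]) 1, HasSum (fun n : ℕ => q ^ n * a (n + 1)) (g q))
    (hfg : ∀ q ∈ Metric.ball (0 : ℍ[ℝ]) 1, f q = q * g q) :
    (∀ q ∈ Metric.ball (0 : ℍ[ℝ]) 1, ‖g q‖ ≤ 1) ∧
      (∀ q₀ ∈ Metric.ball (0 : ℍ[ℝ]) 1, ‖g q₀‖ = 1 →
        ∃ u : ℍ[ℝ], ‖u‖ = 1 ∧ ∀ q ∈ Metric.ball (0 : ℍ[ℝ]) 1, g q = u) :=
  schwarz_lemma_general ⟨fun n => a (n + 1), hg⟩ (fun q hq => (hfb q hq).le) hfg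
end

section
/- Let f : 𝔹 → 𝔹 be regular (f(q) = ∑_{n≥0} qⁿaₙ converging on 𝔹, with f(𝔹) ⊆ 𝔹) and suppose f is a bijection of 𝔹 onto 𝔹. Then for every ν ∈ ℍ with |ν| = 1, the modulus |f(q)| tends to 1 as q tends to ν within 𝔹: for every sequence (qₙ) in 𝔹 with qₙ → ν, one has |f(qₙ)| → 1. -/
open Quaternion

/-! Every `q ∈ ℍ` lies on a complex line `ℝ + ℝI` with `I² = -1`, and on the line of `I` a regular
function reads `f(x + yI) = α(z) + I β(z)`, where `z = x + yi` and the stem functions `α`, `β` do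
not depend on `I`. Hence `c` is a value of `f` on the sphere `{x + yI : I² = -1}` iff
`|α(z) - c| = |β(z)|` and `⟪α(z) - c, β(z)⟫ = 0`, that is, iff the symmetrization
`|α - c|² - |β|² + 2i⟪α - c, β⟫`, a holomorphic function of `z`, vanishes at `z`.

Zeros of holomorphic functions persist under small perturbations, here of `c`, so an injective
regular function maps balls centred at the origin to open sets. A compact subset of `f(𝔹)` is then
covered by the image of a smaller concentric ball; by injectivity its preimage stays away from the
boundary. Applied to the closed balls inside `f(𝔹) = 𝔹`, this is the claim. -/

section Zeros

open Filter Metric Topology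

theorem exists_eq_zero_of_norm_lt_on_sphere {g : ℂ → ℂ} {z₀ : ℂ} {δ : ℝ} (hδ : 0 < δ)
    (hg : DiffContOnCl ℂ g (ball z₀ δ)) (hlt : ∀ z ∈ sphere z₀ δ, ‖g z₀‖ < ‖g z‖) :
    ∃ z ∈ closedBall z₀ δ, g z = 0 := by
  by_contra! hne
  have hinv : DiffContOnCl ℂ g⁻¹ (ball z₀ δ) := hg.inv (by rwa [closure_ball z₀ hδ.ne'])
  obtain ⟨z, hz, hmax⟩ := Complex.exists_mem_frontier_isMaxOn_norm isBounded_ball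
    (nonempty_ball.2 hδ) hinv
  rw [frontier_ball z₀ hδ.ne'] at hz
  have hle : ‖g z₀‖⁻¹ ≤ ‖g z‖⁻¹ := by
    simpa using hmax (subset_closure (mem_ball_self hδ))
  have hpos : 0 < ‖g z₀‖ := norm_pos_iff.2 (hne z₀ (mem_closedBall_self hδ.le))
  exact (hlt z hz).not_ge ((inv_le_inv₀ hpos (hpos.trans (hlt z hz))).1 hle)

/-- A parametric form of Hurwitz's theorem. -/
theorem eventually_exists_mem_eq_zero {X : Type*} [TopologicalSpace X] {F : X → ℂ → ℂ} {U : Set ℂ}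
    {x₀ : X} {z₀ : ℂ} (hU : U ∈ 𝓝 z₀) (hd : ∀ᶠ x in 𝓝 x₀, DifferentiableOn ℂ (F x) U)
    (hc : ∀ z ∈ U, ContinuousAt (Function.uncurry F) (x₀, z)) (hzero : F x₀ z₀ = 0)
    (hne : ∀ᶠ z in 𝓝[≠] z₀, F x₀ z ≠ 0) : ∀ᶠ x in 𝓝 x₀, ∃ z ∈ U, F x z = 0 := by
  obtain ⟨δ, hδ, hball⟩ :=
    nhds_basis_closedBall.mem_iff.1 (inter_mem hU (eventually_nhdsWithin_iff.1 hne))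
  have hsphere : ∀ᶠ x in 𝓝 x₀, ∀ z ∈ sphere z₀ δ, ‖F x z₀‖ < ‖F x z‖ := by
    refine (isCompact_sphere z₀ δ).eventually_forall_of_forall_eventually fun z hz => ?_
    obtain ⟨hzU, hFz⟩ := hball (sphere_subset_closedBall hz)
    have hcenter : ContinuousAt (fun p : X × ℂ => F p.1 z₀) (x₀, z) :=
      ContinuousAt.comp (f := fun p : X × ℂ => (p.1, z₀)) (g := Function.uncurry F)
        (hc z₀ (mem_of_mem_nhds hU)) (by fun_prop)
    refine hcenter.norm.eventually_lt (hc z hzU).norm ?_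
    simpa [hzero] using hFz (ne_of_mem_sphere hz hδ.ne')
  filter_upwards [hd, hsphere] with x hdx hlt
  have hsub : closedBall z₀ δ ⊆ U := fun z hz => (hball hz).1
  obtain ⟨z, hz, hz0⟩ := exists_eq_zero_of_norm_lt_on_sphere hδ
    (hdx.mono (closure_ball_subset_closedBall.trans hsub)).diffContOnCl hlt
  exact ⟨z, hsub hz, hz0⟩

end Zeros

section Stem

open Metric RealInnerProductSpace

variable {E : Type*} [NormedAddCommGroup E]

section NormedSpace

variable [NormedSpace ℝ E]

/-- The first component `α(z) = ∑ Re(zⁿ) aₙ` of the stem function `α + iβ` of `∑ qⁿ aₙ`. -/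
noncomputable def stemRe (a : ℕ → E) (z : ℂ) : E := ∑' n, (z ^ n).re • a n

/-- The second component `β(z) = ∑ Im(zⁿ) aₙ` of the stem function `α + iβ` of `∑ qⁿ aₙ`. -/
noncomputable def stemIm (a : ℕ → E) (z : ℂ) : E := ∑' n, (z ^ n).im • a n

variable [CompleteSpace E] {a : ℕ → E} {R : ℝ}

theorem hasSum_stemRe {z : ℂ} (hz : Summable fun n => ‖z‖ ^ n * ‖a n‖) :
    HasSum (fun n => (z ^ n).re • a n) (stemRe a z) := by
  refine (Summable.of_norm_bounded hz fun n => ?_).hasSum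
  rw [norm_smul, ← norm_pow]
  gcongr
  exact Complex.abs_re_le_norm _

theorem hasSum_stemIm {z : ℂ} (hz : Summable fun n => ‖z‖ ^ n * ‖a n‖) :
    HasSum (fun n => (z ^ n).im • a n) (stemIm a z) := by
  refine (Summable.of_norm_bounded hz fun n => ?_).hasSum
  rw [norm_smul, ← norm_pow]
  gcongr
  exact Complex.abs_im_le_norm _

theorem hasSum_clm_stem (φ : E →L[ℝ] ℝ) {z : ℂ} (hz : Summable fun n => ‖z‖ ^ n * ‖a n‖) :
    HasSum (fun n => z ^ n * (φ (a n) : ℂ)) (φ (stemRe a z) + φ (stemIm a z) * Complex.I) := by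
  have hre := Complex.hasSum_ofReal.2 (φ.hasSum (hasSum_stemRe hz))
  have him := Complex.hasSum_ofReal.2 (φ.hasSum (hasSum_stemIm hz))
  refine (hre.add (him.mul_right Complex.I)).congr_fun fun n => ?_
  rw [map_smul, map_smul, smul_eq_mul, smul_eq_mul]
  conv_lhs => rw [← Complex.re_add_im (z ^ n)]
  push_cast
  ring

theorem differentiableOn_clm_stem (ha : ∀ r ∈ Set.Ico 0 R, Summable fun n => r ^ n * ‖a n‖)
    (φ : E →L[ℝ] ℝ) :
    DifferentiableOn ℂ (fun z => (φ (stemRe a z) : ℂ) + φ (stemIm a z) * Complex.I)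
      (ball 0 R) := by
  intro z hz
  obtain ⟨r, hzr, hrR⟩ := exists_between (mem_ball_zero_iff.1 hz)
  have hr : 0 ≤ r := (norm_nonneg z).trans hzr.le
  have hseries : DifferentiableOn ℂ (fun w => ∑' n, w ^ n * (φ (a n) : ℂ)) (ball 0 r) := by
    refine Complex.differentiableOn_tsum_of_summable_norm ((ha r ⟨hr, hrR⟩).mul_left ‖φ‖)
      (fun n => by fun_prop) isOpen_ball fun n w hw => ?_
    calc ‖w ^ n * (φ (a n) : ℂ)‖ = ‖w‖ ^ n * ‖φ (a n)‖ := by simp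
      _ ≤ r ^ n * (‖φ‖ * ‖a n‖) := by
        gcongr
        exacts [(mem_ball_zero_iff.1 hw).le, φ.le_opNorm _]
      _ = ‖φ‖ * (r ^ n * ‖a n‖) := by ring
  have hstem : DifferentiableOn ℂ
      (fun w => (φ (stemRe a w) : ℂ) + φ (stemIm a w) * Complex.I) (ball 0 r) :=
    hseries.congr fun w hw => (hasSum_clm_stem φ (ha ‖w‖
      ⟨norm_nonneg w, (mem_ball_zero_iff.1 hw).trans hrR⟩)).tsum_eq.symm
  exact (hstem.differentiableAt
    (isOpen_ball.mem_nhds (mem_ball_zero_iff.2 hzr))).differentiableWithinAt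

end NormedSpace

variable [InnerProductSpace ℝ E]

/-- The restriction to `ℂ` of the symmetrization `(f - c)ˢ` of `f - c`, for `f = ∑ qⁿ aₙ`. In terms
of the stem function `α + iβ` of `f` it is the complex-bilinear square of `α - c + iβ`. -/
noncomputable def symmetrization (a : ℕ → E) (c : E) (z : ℂ) : ℂ :=
  ⟨‖stemRe a z - c‖ ^ 2 - ‖stemIm a z‖ ^ 2, 2 * ⟪stemRe a z - c, stemIm a z⟫⟩

theorem symmetrization_eq_zero_iff {a : ℕ → E} {c : E} {z : ℂ} :
    symmetrization a c z = 0 ↔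
      ‖stemRe a z - c‖ = ‖stemIm a z‖ ∧ ⟪stemRe a z - c, stemIm a z⟫ = 0 := by
  simp [symmetrization, Complex.ext_iff, sub_eq_zero]

theorem symmetrization_eq_sum {ι : Type*} [Fintype ι] (b : OrthonormalBasis ι ℝ E) (a : ℕ → E)
    (c : E) (z : ℂ) :
    symmetrization a c z =
      ∑ i, ((⟪b i, stemRe a z⟫ : ℂ) + ⟪b i, stemIm a z⟫ * Complex.I - ⟪b i, c⟫) ^ 2 := by
  have hsq (s t u : ℝ) : ((s : ℂ) + t * Complex.I - u) ^ 2 =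
      ⟨(s - u) ^ 2 - t ^ 2, 2 * ((s - u) * t)⟩ := by
    rw [Complex.mk_eq_add_mul_I]
    push_cast
    linear_combination (t : ℂ) ^ 2 * Complex.I_sq
  simp_rw [hsq, ← inner_sub_right]
  apply Complex.ext
  · rw [Complex.re_sum, Finset.sum_sub_distrib, b.sum_sq_inner_right, b.sum_sq_inner_right]
    rfl
  · rw [Complex.im_sum, ← Finset.mul_sum]
    simp_rw [real_inner_comm (stemRe a z - c), b.sum_inner_mul_inner]
    rfl

variable [FiniteDimensional ℝ E] {a : ℕ → E} {R : ℝ}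

theorem differentiableOn_symmetrization
    (ha : ∀ r ∈ Set.Ico 0 R, Summable fun n => r ^ n * ‖a n‖) (c : E) :
    DifferentiableOn ℂ (symmetrization a c) (ball 0 R) := by
  have := FiniteDimensional.complete ℝ E
  rw [funext (symmetrization_eq_sum (stdOrthonormalBasis ℝ E) a c)]
  exact DifferentiableOn.fun_sum fun i _ =>
    ((differentiableOn_clm_stem ha (innerSL ℝ (stdOrthonormalBasis ℝ E i))).sub_const _).pow 2

theorem continuousAt_uncurry_symmetrization
    (ha : ∀ r ∈ Set.Ico 0 R, Summable fun n => r ^ n * ‖a n‖) (c : E) {z : ℂ} (hz : z ∈ ball 0 R) :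
    ContinuousAt (Function.uncurry (symmetrization a)) (c, z) := by
  have := FiniteDimensional.complete ℝ E
  let b := stdOrthonormalBasis ℝ E
  have hstem (i) : ContinuousAt
      (fun w => (⟪b i, stemRe a w⟫ : ℂ) + ⟪b i, stemIm a w⟫ * Complex.I) z :=
    ((differentiableOn_clm_stem ha (innerSL ℝ (b i))).differentiableAt
      (isOpen_ball.mem_nhds hz)).continuousAt
  have hsum : Function.uncurry (symmetrization a) = fun p : E × ℂ =>
      ∑ i, ((⟪b i, stemRe a p.2⟫ : ℂ) + ⟪b i, stemIm a p.2⟫ * Complex.I - ⟪b i, p.1⟫) ^ 2 :=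
    funext fun p => symmetrization_eq_sum b a p.1 p.2
  rw [hsum]
  refine tendsto_finsetSum _ fun i _ => ContinuousAt.pow (ContinuousAt.sub ?_ (by fun_prop)) 2
  exact ContinuousAt.comp (x := (c, z)) (hstem i) continuousAt_snd

end Stem

section ImaginaryUnits

open RealInnerProductSpace

/-- The sphere `𝕊` of imaginary units of `ℍ`. For `I : ImaginaryUnit`, the map `Complex.lift I`
identifies `ℂ` with the line `ℝ + ℝI` and so represents the slices of `ℍ`. -/
abbrev ImaginaryUnit : Type := {I : ℍ[ℝ] // I * I = -1}

theorem quaternion_mul_self_eq_neg_one_iff {q : ℍ[ℝ]} : q * q = -1 ↔ q.re = 0 ∧ ‖q‖ = 1 := by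
  have hnormSq : normSq q = 1 ↔ ‖q‖ = 1 := by
    rw [normSq_eq_norm_mul_self, ← sq, pow_eq_one_iff_of_nonneg (norm_nonneg q) two_ne_zero]
  constructor
  · intro h
    have hone : normSq q = 1 := by
      rw [normSq_eq_norm_mul_self, ← norm_mul, h, norm_neg, norm_one]
    exact ⟨sq_eq_neg_normSq.1 (by rw [sq, h, hone, coe_one]), hnormSq.1 hone⟩
  · rintro ⟨hre, hnorm⟩
    rw [← sq, sq_eq_neg_normSq.2 hre, hnormSq.2 hnorm, coe_one]

namespace ImaginaryUnit

theorem lift_apply (I : ImaginaryUnit) (z : ℂ) :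
    Complex.lift I z = (z.re : ℍ[ℝ]) + z.im • (I : ℍ[ℝ]) := rfl

theorem norm_lift (I : ImaginaryUnit) (z : ℂ) : ‖Complex.lift I z‖ = ‖z‖ := by
  obtain ⟨hre, hnorm⟩ := quaternion_mul_self_eq_neg_one_iff.1 I.2
  have horth : ⟪(z.re : ℍ[ℝ]), z.im • (I : ℍ[ℝ])⟫ = 0 := by simp [inner_def, hre]
  rw [← sq_eq_sq₀ (norm_nonneg _) (norm_nonneg _), lift_apply, norm_add_sq_real, horth, norm_smul,
    hnorm, norm_coe, Complex.sq_norm, Complex.normSq_apply]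
  simp [sq]

instance : Nonempty ImaginaryUnit :=
  ⟨⟨(Complex.I : ℍ[ℝ]), by rw [← coeComplex_mul, Complex.I_mul_I]; ext <;> simp⟩⟩

theorem lift_mem_ball_zero_iff {I : ImaginaryUnit} {z : ℂ} {R : ℝ} :
    Complex.lift I z ∈ Metric.ball 0 R ↔ z ∈ Metric.ball 0 R := by
  rw [mem_ball_zero_iff, mem_ball_zero_iff, norm_lift]

theorem exists_lift_eq (q : ℍ[ℝ]) : ∃ (I : ImaginaryUnit) (z : ℂ), Complex.lift I z = q := by
  by_cases him : q.im = 0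
  · obtain ⟨I⟩ : Nonempty ImaginaryUnit := inferInstance
    refine ⟨I, q.re, ?_⟩
    conv_rhs => rw [← q.re_add_im, him]
    simp
  · have hunit : (‖q.im‖⁻¹ • q.im) * (‖q.im‖⁻¹ • q.im) = -1 :=
      quaternion_mul_self_eq_neg_one_iff.2 ⟨by simp, norm_smul_inv_norm him⟩
    refine ⟨⟨_, hunit⟩, ⟨q.re, ‖q.im‖⟩, ?_⟩
    rw [lift_apply, smul_inv_smul₀ (norm_ne_zero_iff.2 him), re_add_im]

theorem exists_add_mul_eq_zero_iff {p q : ℍ[ℝ]} :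
    (∃ I : ImaginaryUnit, p + I * q = 0) ↔ ‖p‖ = ‖q‖ ∧ ⟪p, q⟫ = 0 := by
  constructor
  · rintro ⟨⟨I, hI⟩, hp⟩
    obtain ⟨hre, hnorm⟩ := quaternion_mul_self_eq_neg_one_iff.1 hI
    obtain rfl := eq_neg_of_add_eq_zero_left hp
    simp [inner_def, mul_assoc, self_mul_star, hre, hnorm]
  · rintro ⟨hnorm, hinner⟩
    rcases eq_or_ne q 0 with rfl | hq
    · obtain ⟨I⟩ : Nonempty ImaginaryUnit := inferInstance
      exact ⟨I, by simpa using hnorm⟩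
    · have hre : (-(p * q⁻¹)).re = 0 := by
        rw [re_neg, Quaternion.inv_def, mul_smul_comm, re_smul, ← inner_def, hinner, smul_zero,
          neg_zero]
      have hone : ‖-(p * q⁻¹)‖ = 1 := by
        rw [norm_neg, norm_mul, norm_inv, hnorm, mul_inv_cancel₀ (norm_ne_zero_iff.2 hq)]
      refine ⟨⟨_, quaternion_mul_self_eq_neg_one_iff.2 ⟨hre, hone⟩⟩, ?_⟩
      rw [neg_mul, inv_mul_cancel_right₀ hq, add_neg_cancel]

end ImaginaryUnit

end ImaginaryUnits

/-- `f` is regular on the ball of radius `R`, with power series `f(q) = ∑ qⁿ aₙ`. -/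
def HasRegularExpansion (f : ℍ[ℝ] → ℍ[ℝ]) (a : ℕ → ℍ[ℝ]) (R : ℝ) : Prop :=
  ∀ q ∈ Metric.ball (0 : ℍ[ℝ]) R, HasSum (fun n => q ^ n * a n) (f q)

namespace HasRegularExpansion

open Filter Metric Set Topology

variable {f : ℍ[ℝ] → ℍ[ℝ]} {a : ℕ → ℍ[ℝ]} {R : ℝ}

theorem mono {r : ℝ} (h : HasRegularExpansion f a R) (hr : r ≤ R) : HasRegularExpansion f a r :=
  fun q hq => h q (ball_subset_ball hr hq)

theorem summable_pow_mul_norm (h : HasRegularExpansion f a R) {r : ℝ} (hr : r ∈ Ico 0 R) :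
    Summable fun n => r ^ n * ‖a n‖ := by
  have hmem : (r : ℍ[ℝ]) ∈ ball 0 R := by simpa [abs_of_nonneg hr.1] using hr.2
  refine (summable_norm_iff.2 (h r hmem).summable).congr fun n => ?_
  simp [abs_of_nonneg hr.1]

theorem apply_lift (h : HasRegularExpansion f a R) (I : ImaginaryUnit) {z : ℂ}
    (hz : z ∈ ball 0 R) : f (Complex.lift I z) = stemRe a z + I * stemIm a z := by
  have hsum := h.summable_pow_mul_norm ⟨norm_nonneg z, mem_ball_zero_iff.1 hz⟩
  refine (h _ (ImaginaryUnit.lift_mem_ball_zero_iff.2 hz)).unique ?_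
  refine ((hasSum_stemRe hsum).add ((hasSum_stemIm hsum).mul_left (I : ℍ[ℝ]))).congr_fun fun n => ?_
  rw [← map_pow, ImaginaryUnit.lift_apply, add_mul, coe_mul_eq_smul, smul_mul_assoc, mul_smul_comm]

theorem symmetrization_eq_zero_iff (h : HasRegularExpansion f a R) (c : ℍ[ℝ]) {z : ℂ}
    (hz : z ∈ ball 0 R) :
    symmetrization a c z = 0 ↔ ∃ I : ImaginaryUnit, f (Complex.lift I z) = c := by
  rw [_root_.symmetrization_eq_zero_iff, ← ImaginaryUnit.exists_add_mul_eq_zero_iff]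
  simp_rw [h.apply_lift _ hz, sub_add_eq_add_sub, sub_eq_zero]

theorem exists_symmetrization_eq_zero_iff (h : HasRegularExpansion f a R) (c : ℍ[ℝ]) :
    (∃ z ∈ ball 0 R, symmetrization a c z = 0) ↔ c ∈ f '' ball 0 R := by
  constructor
  · rintro ⟨z, hz, hzero⟩
    obtain ⟨I, hI⟩ := (h.symmetrization_eq_zero_iff c hz).1 hzero
    exact ⟨_, ImaginaryUnit.lift_mem_ball_zero_iff.2 hz, hI⟩
  · rintro ⟨q, hq, hc⟩
    obtain ⟨I, z, rfl⟩ := ImaginaryUnit.exists_lift_eq q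
    have hz : z ∈ ball 0 R := ImaginaryUnit.lift_mem_ball_zero_iff.1 hq
    exact ⟨z, hz, (h.symmetrization_eq_zero_iff c hz).2 ⟨I, hc⟩⟩

theorem image_ball_mem_nhds (h : HasRegularExpansion f a R) {w : ℍ[ℝ]} (hw : w ∈ f '' ball 0 R)
    {x : ℝ} (hx : |x| < R) (hfx : f x ≠ w) : f '' ball 0 R ∈ 𝓝 w := by
  obtain ⟨z₀, hz₀, hzero⟩ := (h.exists_symmetrization_eq_zero_iff w).2 hw
  have hd (c : ℍ[ℝ]) : DifferentiableOn ℂ (symmetrization a c) (ball 0 R) :=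
    differentiableOn_symmetrization (fun _ => h.summable_pow_mul_norm) c
  have hx' : (x : ℂ) ∈ ball 0 R := by simpa using hx
  have hne : symmetrization a w x ≠ 0 := by
    rw [Ne, h.symmetrization_eq_zero_iff w hx']
    rintro ⟨I, hI⟩
    exact hfx (by simpa [ImaginaryUnit.lift_apply] using hI)
  have hisolated : ∀ᶠ z in 𝓝[≠] z₀, symmetrization a w z ≠ 0 := by
    refine not_frequently.1 fun hfreq => hne ?_
    exact ((hd w).analyticOnNhd isOpen_ball).eqOn_zero_of_preconnected_of_frequently_eq_zero
      (convex_ball 0 R).isPreconnected hz₀ hfreq hx'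
  filter_upwards [eventually_exists_mem_eq_zero (isOpen_ball.mem_nhds hz₀) (.of_forall hd)
    (fun z => continuousAt_uncurry_symmetrization (fun _ => h.summable_pow_mul_norm) w)
    hzero hisolated] with c hc
  exact (h.exists_symmetrization_eq_zero_iff c).1 hc

theorem isOpen_image_ball (h : HasRegularExpansion f a R) (hf : InjOn f (ball 0 R)) :
    IsOpen (f '' ball 0 R) := by
  refine isOpen_iff_mem_nhds.2 fun w hw => ?_
  have hR : 0 < R := (nonempty_ball (x := (0 : ℍ[ℝ]))).1 (image_nonempty.1 ⟨w, hw⟩)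
  have hhalf : |R / 2| < R := by rw [abs_of_pos (half_pos hR)]; exact half_lt_self hR
  have hne : f (0 : ℝ) ≠ f (R / 2 : ℝ) :=
    hf.ne (by simpa) (by rwa [mem_ball_zero_iff, norm_coe])
      (coe_injective.ne (half_pos hR).ne)
  rcases eq_or_ne (f (0 : ℝ)) w with h0 | h0
  · exact h.image_ball_mem_nhds hw hhalf (h0 ▸ hne.symm)
  · exact h.image_ball_mem_nhds hw (by simpa) h0

theorem exists_lt_subset_image_ball_of_isCompact (h : HasRegularExpansion f a R)
    (hf : InjOn f (ball 0 R)) {K : Set ℍ[ℝ]} (hK : IsCompact K) (hKf : K ⊆ f '' ball 0 R) :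
    ∃ r < R, K ⊆ f '' ball 0 r := by
  have hcover : K ⊆ ⋃ r : Iio R, f '' ball 0 r := by
    intro w hw
    obtain ⟨q, hq, rfl⟩ := hKf hw
    obtain ⟨r, hqr, hrR⟩ := exists_between (mem_ball_zero_iff.1 hq)
    exact mem_iUnion.2 ⟨⟨r, hrR⟩, mem_image_of_mem f (mem_ball_zero_iff.2 hqr)⟩
  have hopen (r : Iio R) : IsOpen (f '' ball 0 (r : ℝ)) :=
    (h.mono r.2.le).isOpen_image_ball (hf.mono (ball_subset_ball r.2.le))
  have hmono : Monotone fun r : Iio R => f '' ball 0 (r : ℝ) :=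
    fun _ _ hrs => image_mono (ball_subset_ball hrs)
  obtain ⟨r, hr⟩ := hK.elim_directed_cover _ hopen hcover hmono.directed_le
  exact ⟨r, r.2, hr⟩

end HasRegularExpansion

open Filter Metric Set Topology in
theorem boundary_limit_of_regular_bijection_general {f : ℍ[ℝ] → ℍ[ℝ]} {a : ℕ → ℍ[ℝ]} {R R' : ℝ}
    (hf : HasRegularExpansion f a R) (hbij : BijOn f (ball 0 R) (ball 0 R'))
    {ι : Type*} {l : Filter ι} {q : ι → ℍ[ℝ]}
    (hq : ∀ᶠ i in l, q i ∈ ball (0 : ℍ[ℝ]) R) (hlim : Tendsto (fun i => ‖q i‖) l (𝓝 R)) :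
    Tendsto (fun i => ‖f (q i)‖) l (𝓝 R') := by
  refine tendsto_order.2 ⟨fun s hs => ?_, fun s hs => ?_⟩
  · have hsub : closedBall 0 s ⊆ f '' ball 0 R := by
      rw [hbij.image_eq]
      exact closedBall_subset_ball hs
    obtain ⟨r, hrR, hr⟩ := hf.exists_lt_subset_image_ball_of_isCompact hbij.injOn
      (isCompact_closedBall 0 s) hsub
    filter_upwards [hq, hlim.eventually_const_lt hrR] with i hi hri
    by_contra! hle
    obtain ⟨p, hp, hpi⟩ := hr (mem_closedBall_zero_iff.2 hle)
    obtain rfl := hbij.injOn (ball_subset_ball hrR.le hp) hi hpi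
    exact hri.not_gt (mem_ball_zero_iff.1 hp)
  · filter_upwards [hq] with i hi
    exact (mem_ball_zero_iff.1 (hbij.mapsTo hi)).trans hs

/-- If `f : 𝔹 → 𝔹` is regular and bijective, then `|f(q)| → 1` as `q` tends to any boundary
point `ν` (with `|ν| = 1`) from within the ball. -/
theorem boundary_limit_of_regular_bijection (f : ℍ[ℝ] → ℍ[ℝ]) (a : ℕ → ℍ[ℝ])
    (hf : ∀ q ∈ Metric.ball (0 : ℍ[ℝ]) 1, HasSum (fun n : ℕ => q ^ n * a n) (f q))
    (hbij : Set.BijOn f (Metric.ball 0 1) (Metric.ball 0 1)) :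
    ∀ ν : ℍ[ℝ], ‖ν‖ = 1 → ∀ q : ℕ → ℍ[ℝ], (∀ n, q n ∈ Metric.ball (0 : ℍ[ℝ]) 1) →
      Filter.Tendsto q Filter.atTop (nhds ν) →
      Filter.Tendsto (fun n => ‖f (q n)‖) Filter.atTop (nhds 1) :=
  fun _ hν _ hq hlim =>
    boundary_limit_of_regular_bijection_general hf hbij (.of_forall hq) (hν ▸ hlim.norm)
end

section
/- For all a, b ∈ ℍ with |a| < 1 and |b| < 1 there exist c ∈ ℍ with |c| < 1 and u ∈ ℍ with |u| = 1 such that the regular Moebius transformation M(q) = (1 − q·conj(c))^{-*} * (q − c)·u, given explicitly by M(q) = (|c|²q² − 2Re(c)q + 1)⁻¹ · (−q²c + q(1 + c²) − c) · u, satisfies M(a) = b. (The regular Moebius transformations act transitively on the open unit ball.) -/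
open Quaternion

/-! Where `c` commutes with `q`, the regular Moebius transformation takes the value
`(1 - q c̄)⁻¹ (q - c) u` of the classical one. Write `a = ‖a‖ v` with `‖v‖ = 1` and look for `c`
on the diameter through `v`: there the classical transformation is the real map
`p ↦ (p - s) / (1 - p s)`, and a suitable `s` moves `‖a‖` to `‖b‖`. The rotation `u` then turns
`‖b‖ v` into `b`. -/

theorem exists_norm_eq_one_norm_smul_eq {E : Type*} [NormedAddCommGroup E] [NormedSpace ℝ E]
    [Nontrivial E] (x : E) : ∃ v : E, ‖v‖ = 1 ∧ ‖x‖ • v = x := by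
  rcases eq_or_ne x 0 with rfl | hx
  · obtain ⟨v, hv⟩ := exists_norm_eq E zero_le_one
    exact ⟨v, hv, by rw [norm_zero, zero_smul]⟩
  · exact ⟨‖x‖⁻¹ • x, norm_smul_inv_norm hx, smul_inv_smul₀ (norm_ne_zero_iff.mpr hx) x⟩

theorem abs_mul_lt_one {R : Type*} [Ring R] [LinearOrder R] [IsOrderedRing R] {p r : R}
    (hp : |p| < 1) (hr : |r| < 1) : |p * r| < 1 := by
  rw [abs_mul]
  exact mul_lt_one_of_nonneg_of_lt_one_left (abs_nonneg p) hp hr.le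

theorem exists_abs_lt_one_sub_div_one_sub_mul_eq {K : Type*} [Field K] [LinearOrder K]
    [IsStrictOrderedRing K] {p r : K} (hp : |p| < 1) (hr : |r| < 1) :
    ∃ s : K, |s| < 1 ∧ (p - s) / (1 - p * s) = r := by
  have hpr : 0 < 1 - p * r := sub_pos.mpr (lt_of_abs_lt (abs_mul_lt_one hp hr))
  have hs : |(p - r) / (1 - p * r)| < 1 := by
    rw [abs_lt] at hp hr
    rw [abs_lt, lt_div_iff₀ hpr, div_lt_one hpr]
    have hleft : 0 < (1 + p) * (1 - r) := mul_pos (by linarith) (by linarith)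
    have hright : 0 < (1 - p) * (1 + r) := mul_pos (by linarith) (by linarith)
    constructor <;> linarith
  have hps : 0 < 1 - p * ((p - r) / (1 - p * r)) :=
    sub_pos.mpr (lt_of_abs_lt (abs_mul_lt_one hp hs))
  refine ⟨(p - r) / (1 - p * r), hs, ?_⟩
  rw [div_eq_iff hps.ne']
  field_simp
  ring

section Ring

variable {R : Type*} [Ring R] {q c d : R}

theorem one_sub_mul_mul_sub_of_commute (h : Commute q c) :
    (1 - q * c) * (q - c) = -(q ^ 2) * c + q * (1 + c ^ 2) - c := by
  have hqcq : q * c * q = q ^ 2 * c := by rw [mul_assoc, ← h.eq, ← mul_assoc, sq]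
  rw [sub_mul, mul_sub (q * c), hqcq]
  noncomm_ring

theorem one_sub_mul_mul_one_sub_mul_of_commute (hc : Commute q c) (hd : Commute q d) :
    (1 - q * c) * (1 - q * d) = c * d * q ^ 2 - (c + d) * q + 1 := by
  rw [hc.eq, hd.eq, sub_mul, mul_sub (c * q), hd.mul_mul_mul_comm, ← sq, add_mul]
  noncomm_ring

end Ring

theorem commute_star_of_commute {R : Type*} [CommRing R] {q c : ℍ[R]} (h : Commute q c) :
    Commute q (star c) := by
  rw [star_eq_two_re_sub]
  exact (coe_commute _ q).symm.sub_right h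

/-- The value at `q` of the regular Moebius transformation `(1 - q c̄)^{-*} * (q - c) u`, written
out as a pointwise quotient. -/
noncomputable def regularMoebius (c u q : ℍ[ℝ]) : ℍ[ℝ] :=
  (((‖c‖ ^ 2 : ℝ) : ℍ[ℝ]) * q ^ 2 - ((2 * c.re : ℝ) : ℍ[ℝ]) * q + 1)⁻¹ *
    (-(q ^ 2) * c + q * (1 + c ^ 2) - c) * u

namespace regularMoebius

theorem denominator_eq_of_commute {c q : ℍ[ℝ]} (h : Commute q c) :
    ((‖c‖ ^ 2 : ℝ) : ℍ[ℝ]) * q ^ 2 - ((2 * c.re : ℝ) : ℍ[ℝ]) * q + 1 =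
      (1 - q * c) * (1 - q * star c) := by
  rw [one_sub_mul_mul_one_sub_mul_of_commute h (commute_star_of_commute h), self_mul_star,
    self_add_star', normSq_eq_norm_mul_self, sq ‖c‖]

theorem eq_of_commute {c q : ℍ[ℝ]} (h : Commute q c) (hqc : 1 - q * c ≠ 0) (u : ℍ[ℝ]) :
    regularMoebius c u q = (1 - q * star c)⁻¹ * (q - c) * u := by
  rw [regularMoebius, denominator_eq_of_commute h, ← one_sub_mul_mul_sub_of_commute h,
    mul_inv_rev, mul_assoc (1 - q * star c)⁻¹, inv_mul_cancel_left₀ hqc]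

theorem smul_smul_eq {p s : ℝ} {v : ℍ[ℝ]} (hps : |p * s| < 1) (hv : ‖v‖ = 1) (u : ℍ[ℝ]) :
    regularMoebius (s • v) u (p • v) = ((p - s) / (1 - p * s)) • (v * u) := by
  have hcomm : Commute (p • v) (s • v) := ((Commute.refl v).smul_left p).smul_right s
  have hne : 1 - p • v * s • v ≠ 0 := by
    refine (isUnit_one_sub_of_norm_lt_one ?_).ne_zero
    rwa [norm_mul, norm_smul, norm_smul, hv, mul_one, mul_one, ← norm_mul]
  have hvv : v * star v = 1 := by
    rw [self_mul_star, normSq_eq_norm_mul_self, hv, mul_one, coe_one]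
  have hden : 1 - p • v * star (s • v) = ((1 - p * s : ℝ) : ℍ[ℝ]) := by
    rw [Quaternion.star_smul, smul_mul_smul_comm, hvv, ← coe_mul_eq_smul, mul_one, coe_sub,
      coe_one]
  rw [eq_of_commute hcomm hne, hden, ← sub_smul, ← coe_inv, coe_mul_eq_smul, smul_smul,
    smul_mul_assoc, inv_mul_eq_div]

end regularMoebius

/-- The regular Moebius transformations act transitively on the open unit ball: for all
`a, b ∈ 𝔹` there is a regular Moebius transformation
`M(q) = (|c|²q² − 2Re(c)q + 1)⁻¹ · (−q²c + q(1 + c²) − c) · u` with `M(a) = b`. -/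
theorem regular_moebius_transitive (a b : ℍ[ℝ]) (ha : ‖a‖ < 1) (hb : ‖b‖ < 1) :
    ∃ c u : ℍ[ℝ], ‖c‖ < 1 ∧ ‖u‖ = 1 ∧
      (((‖c‖ ^ 2 : ℝ) : ℍ[ℝ]) * a ^ 2 - ((2 * c.re : ℝ) : ℍ[ℝ]) * a + 1)⁻¹ *
        (-(a ^ 2) * c + a * (1 + c ^ 2) - c) * u = b := by
  obtain ⟨v, hv, hav⟩ := exists_norm_eq_one_norm_smul_eq a
  obtain ⟨w, hw, hbw⟩ := exists_norm_eq_one_norm_smul_eq b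
  rw [← abs_norm] at ha hb
  obtain ⟨s, hs, hsb⟩ := exists_abs_lt_one_sub_div_one_sub_mul_eq ha hb
  have hv0 : v ≠ 0 := norm_ne_zero_iff.mp (hv ▸ one_ne_zero)
  refine ⟨s • v, v⁻¹ * w, ?_, ?_, ?_⟩
  · rwa [norm_smul, hv, mul_one]
  · rw [norm_mul, norm_inv, hv, hw, inv_one, mul_one]
  · calc regularMoebius (s • v) (v⁻¹ * w) a
      _ = regularMoebius (s • v) (v⁻¹ * w) (‖a‖ • v) := by rw [hav]
      _ = ‖b‖ • (v * (v⁻¹ * w)) := by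
        rw [regularMoebius.smul_smul_eq (abs_mul_lt_one ha hs) hv, hsb]
      _ = b := by rw [mul_inv_cancel_left₀ hv0, hbw]
end
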